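/- Let b be a positive divisor of d and let U be a unitary matrix on ℂ^d such that U Z^b U† is a unimodular scalar multiple of some GPM. Let s, t be integers and write t = p·b + r with 0 ≤ r < b (division with remainder). Then U (X^s Z^t) U† is a unimodular scalar multiple of some GPM if and only if U (X^s Z^r) U† is a unimodular scalar multiple of some GPM. -/

import Mathlib

open Matrix

/-- The primitive `d`-th root of unity `ω = e^{2πi/d}`. -/
noncomputable def omega (d : ℕ) : ℂ := Complex.exp (2 * Real.pi * Complex.I / d)

/-- The power `X^s` (for any integer `s`) of the shift matrix `X` on `ℂ^d`,
`X|j⟩ = |j+1 mod d⟩`; its `(i,j)` entry is `1` iff `i ≡ j + s (mod d)`. -/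
def Xpow (d : ℕ) (s : ℤ) : Matrix (Fin d) (Fin d) ℂ :=
  Matrix.of fun i j => if (i : ℤ) = (((j : ℕ) : ℤ) + s) % (d : ℤ) then (1 : ℂ) else 0

/-- The power `Z^t` (for any integer `t`) of the clock matrix `Z` on `ℂ^d`,
`Z|j⟩ = ω^j |j⟩`; it is diagonal with entries `ω^{t·j} = e^{2πi·t·j/d}`. -/
noncomputable def Zpow (d : ℕ) (t : ℤ) : Matrix (Fin d) (Fin d) ℂ :=
  Matrix.diagonal fun j => Complex.exp (2 * Real.pi * Complex.I * (t : ℂ) * ((j : ℕ) : ℂ) / (d : ℂ))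

/-- The generalized Pauli matrix `X^s Z^t` on `ℂ^d`. -/
noncomputable def GPM (d : ℕ) (s t : ℤ) : Matrix (Fin d) (Fin d) ℂ :=
  Xpow d s * Zpow d t

/-- `A ≈ B` : equality up to a unimodular (global phase) scalar. -/
def PhaseEq {n : Type*} (A B : Matrix n n ℂ) : Prop :=
  ∃ c : ℂ, ‖c‖ = 1 ∧ A = c • B


/-- `A` is a unimodular scalar multiple of some generalized Pauli matrix on `ℂ^d`. -/
def GPMScalar (d : ℕ) (A : Matrix (Fin d) (Fin d) ℂ) : Prop :=
  ∃ (c : ℂ) (m n : ℤ), ‖c‖ = 1 ∧ A = c • GPM d m n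

/-!
By the commutation relation `Z ^ t * X ^ s = ω ^ (t * s) • (X ^ s * Z ^ t)`, the unimodular
multiples of generalized Pauli matrices are closed under products and inverses. So for a
multiplicative map `φ`, such as conjugation by `U`, the exponents `t` for which `φ (Z ^ t)` is such
a multiple form a subgroup of `ℤ`. If that subgroup contains `b`, it contains every multiple of `b`,
and changing `t` by a multiple of `b` only multiplies `φ (X ^ s * Z ^ t)` by another such multiple.
-/

section ClockShift

variable {d : ℕ}

lemma natCast_zmod_fin_inj {i j : Fin d} :
    ((i : ℕ) : ZMod d) = (j : ℕ) ↔ i = j := by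
  rw [ZMod.natCast_eq_natCast_iff', Nat.mod_eq_of_lt i.isLt, Nat.mod_eq_of_lt j.isLt, Fin.ext_iff]

lemma Xpow_apply (s : ℤ) (i j : Fin d) :
    Xpow d s i j = if ((i : ℕ) : ZMod d) = (j : ℕ) + s then 1 else 0 := by
  have hi : ((i : ℕ) : ℤ) % d = (i : ℕ) := by exact_mod_cast Nat.mod_eq_of_lt i.isLt
  have h := ZMod.intCast_eq_intCast_iff' (i : ℕ) ((j : ℕ) + s) d
  rw [hi] at h
  push_cast at h
  simp only [Xpow, of_apply, h]

lemma Xpow_zero : Xpow d 0 = 1 := by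
  ext i j
  simp only [Xpow_apply, Int.cast_zero, add_zero, natCast_zmod_fin_inj, one_apply]

lemma Zpow_zero : Zpow d 0 = 1 := by
  simp [Zpow]

lemma Zpow_add (s t : ℤ) : Zpow d (s + t) = Zpow d s * Zpow d t := by
  simp only [Zpow, diagonal_mul_diagonal, ← Complex.exp_add, Int.cast_add, mul_add, add_mul,
    add_div]

lemma GPM_zero_zero : GPM d 0 0 = 1 := by
  rw [GPM, Xpow_zero, Zpow_zero, mul_one]

variable [NeZero d]

lemma Xpow_add (s t : ℤ) : Xpow d (s + t) = Xpow d s * Xpow d t := by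
  ext i j
  obtain ⟨k, hk⟩ : ∃ k : Fin d, ((k : ℕ) : ZMod d) = (j : ℕ) + t :=
    ⟨⟨_, ZMod.val_lt _⟩, ZMod.natCast_zmod_val _⟩
  have hcol (l : Fin d) : Xpow d t l j = if l = k then 1 else 0 := by
    simp only [Xpow_apply, ← hk, natCast_zmod_fin_inj]
  simp only [mul_apply, hcol, mul_ite, mul_one, mul_zero, Finset.sum_ite_eq', Finset.mem_univ,
    if_true, Xpow_apply, hk, Int.cast_add, add_assoc, add_comm (s : ZMod d)]

lemma Zpow_eq_diagonal_stdAddChar (t : ℤ) :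
    Zpow d t = diagonal fun j : Fin d => ZMod.stdAddChar (t * (j : ℕ) : ZMod d) := by
  refine congrArg diagonal (funext fun j => ?_)
  have h := ZMod.stdAddChar_coe (N := d) (t * (j : ℕ))
  push_cast at h
  rw [h, mul_assoc _ (t : ℂ)]

lemma Zpow_mul_Xpow (s t : ℤ) :
    Zpow d t * Xpow d s = ZMod.stdAddChar (t * s : ZMod d) • (Xpow d s * Zpow d t) := by
  ext i j
  rw [Zpow_eq_diagonal_stdAddChar, Matrix.smul_apply, diagonal_mul, mul_diagonal, Xpow_apply]
  split_ifs with hij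
  · rw [hij, mul_add, AddChar.map_add_eq_mul, smul_eq_mul]
    ring
  · simp

lemma GPM_mul_GPM (m n m' n' : ℤ) :
    GPM d m n * GPM d m' n' =
      ZMod.stdAddChar (n * m' : ZMod d) • GPM d (m + m') (n + n') := by
  calc GPM d m n * GPM d m' n'
      = Xpow d m * (Zpow d n * Xpow d m') * Zpow d n' := by simp only [GPM, mul_assoc]
    _ = ZMod.stdAddChar (n * m' : ZMod d) • GPM d (m + m') (n + n') := by
      simp only [Zpow_mul_Xpow, GPM, Xpow_add, Zpow_add, Matrix.mul_smul, Matrix.smul_mul,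
        mul_assoc]

lemma smul_GPM_neg_mul_GPM (m n : ℤ) :
    ZMod.stdAddChar (n * m : ZMod d) • (GPM d (-m) (-n) * GPM d m n) = 1 := by
  rw [GPM_mul_GPM, neg_add_cancel, neg_add_cancel, GPM_zero_zero, smul_smul,
    ← AddChar.map_add_eq_mul, Int.cast_neg, neg_mul, add_neg_cancel, AddChar.map_zero_eq_one,
    one_smul]

end ClockShift

namespace GPMScalar

variable {d : ℕ}

lemma one : GPMScalar d 1 :=
  ⟨1, 0, 0, norm_one, by rw [GPM_zero_zero, one_smul]⟩

variable [NeZero d] {A B : Matrix (Fin d) (Fin d) ℂ}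

lemma mul (hA : GPMScalar d A) (hB : GPMScalar d B) : GPMScalar d (A * B) := by
  obtain ⟨c, m, n, hc, rfl⟩ := hA
  obtain ⟨c', m', n', hc', rfl⟩ := hB
  refine ⟨c * c' * ZMod.stdAddChar (n * m' : ZMod d), m + m', n + n', ?_, ?_⟩
  · simp only [norm_mul, hc, hc', AddChar.norm_apply, mul_one]
  · rw [smul_mul_smul_comm, GPM_mul_GPM, smul_smul]

lemma of_mul_eq_one (hA : GPMScalar d A) (hAB : A * B = 1) : GPMScalar d B := by
  obtain ⟨c, m, n, hc, rfl⟩ := hA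
  have hc0 : c ≠ 0 := norm_ne_zero_iff.mp (hc ▸ one_ne_zero)
  refine ⟨c⁻¹ * ZMod.stdAddChar (n * m : ZMod d), -m, -n, ?_, ?_⟩
  · simp only [norm_mul, norm_inv, hc, AddChar.norm_apply, inv_one, mul_one]
  · refine (left_inv_eq_right_inv ?_ hAB).symm
    rw [smul_mul_smul_comm, mul_right_comm, inv_mul_cancel₀ hc0, one_mul, smul_GPM_neg_mul_GPM]

end GPMScalar

section MultiplicativeMap

variable {d : ℕ} [NeZero d] (φ : Matrix (Fin d) (Fin d) ℂ →* Matrix (Fin d) (Fin d) ℂ)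

/-- The exponents `t` for which a multiplicative map `φ` sends the clock power `Z ^ t` to a
unimodular multiple of a generalized Pauli matrix, as a subgroup of `ℤ`. -/
def clockExponents : AddSubgroup ℤ where
  carrier := {t | GPMScalar d (φ (Zpow d t))}
  zero_mem' := by
    simpa only [Set.mem_ofPred_eq, Zpow_zero, map_one] using GPMScalar.one
  add_mem' hs ht := by
    simpa only [Set.mem_ofPred_eq, Zpow_add, map_mul] using GPMScalar.mul hs ht
  neg_mem' {t} ht := by
    refine GPMScalar.of_mul_eq_one ht ?_
    rw [← map_mul, ← Zpow_add, add_neg_cancel, Zpow_zero, map_one]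

variable {φ}

lemma mem_clockExponents {t : ℤ} : t ∈ clockExponents φ ↔ GPMScalar d (φ (Zpow d t)) :=
  Iff.rfl

lemma GPMScalar.map_mul_Zpow_of_sub_mem {A : Matrix (Fin d) (Fin d) ℂ} {r t : ℤ}
    (hr : GPMScalar d (φ (A * Zpow d r))) (h : t - r ∈ clockExponents φ) :
    GPMScalar d (φ (A * Zpow d t)) := by
  rw [← add_sub_cancel r t, Zpow_add, ← mul_assoc, map_mul]
  exact hr.mul (mem_clockExponents.mp h)

theorem division_algorithm_step_general {b : ℤ} (hb : GPMScalar d (φ (Zpow d b)))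
    (A : Matrix (Fin d) (Fin d) ℂ) {t r : ℤ} (htr : t ≡ r [ZMOD b]) :
    GPMScalar d (φ (A * Zpow d t)) ↔ GPMScalar d (φ (A * Zpow d r)) := by
  have hrt : r - t ∈ clockExponents φ := by
    obtain ⟨k, hk⟩ := htr.dvd
    rw [hk, mul_comm, ← smul_eq_mul]
    exact zsmul_mem (mem_clockExponents.mpr hb) k
  have htr' : t - r ∈ clockExponents φ := neg_sub r t ▸ neg_mem hrt
  exact ⟨fun h => h.map_mul_Zpow_of_sub_mem hrt, fun h => h.map_mul_Zpow_of_sub_mem htr'⟩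

end MultiplicativeMap

/-- **division algorithm step.** If `b ∣ d` is positive, `U` is unitary with
`U Z^b U†` a unimodular multiple of a GPM, and `t = p·b + r` with `0 ≤ r < b`, then
`U (X^s Z^t) U†` is a unimodular multiple of a GPM iff `U (X^s Z^r) U†` is. -/
theorem division_algorithm_step (d : ℕ) (hd : 2 ≤ d) (b : ℕ) (hb0 : 0 < b) (hb : b ∣ d)
    (U : Matrix (Fin d) (Fin d) ℂ) (hU : U ∈ Matrix.unitaryGroup (Fin d) ℂ)
    (hUZ : GPMScalar d (U * Zpow d (b : ℤ) * Uᴴ))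
    (s t p r : ℤ) (ht : t = p * b + r) (hr0 : 0 ≤ r) (hr : r < b) :
    GPMScalar d (U * GPM d s t * Uᴴ) ↔ GPMScalar d (U * GPM d s r * Uᴴ) := by
  have : NeZero d := ⟨by omega⟩
  have htr : t ≡ r [ZMOD b] := by simp [ht, Int.ModEq]
  exact division_algorithm_step_general
    (φ := (Unitary.conjStarAlgAut ℂ _ ⟨U, hU⟩ : _ →* _)) hUZ (Xpow d s) htr
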